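/- arXiv:1705.08379 — 5 statements merged into one kernel-verified Lean document; each statement's English description precedes it below -/
import Mathlib

section
/- Let r ≥ 1, let G be an r-regular finite simple graph on n vertices, k ≥ 0 an integer, and S(G) the 3k-subdivision of G. The following are equivalent: (i) S(G) admits a perfect edge dominating set of size exactly (nr/(2(2r-1)))·(2rk - k + 1); (ii) the vertices of G can be colored with two colors W and Y so that no two W-vertices are adjacent and every Y-vertex has exactly one Y-neighbor; (iii) G admits an efficient edge dominating set. -/
/-- An edge `e` dominates an edge `f` if they share an endpoint (in particular,
every edge dominates itself). -/
def edgeDom {V : Type*} (e f : Sym2 V) : Prop := ∃ v, v ∈ e ∧ v ∈ f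

/-- `P` is a perfect edge dominating set of `G`. -/
def IsPEDS {V : Type*} (G : SimpleGraph V) (P : Set (Sym2 V)) : Prop :=
  P ⊆ G.edgeSet ∧ ∀ f ∈ G.edgeSet, f ∉ P → ∃! e, e ∈ P ∧ edgeDom e f

/-- `H` is the `3k`-subdivision of `G`, witnessed by the map `ι : V → W`
(the images of the original vertices, "extremes") and, for every ordered pair
`(v, w)` of adjacent vertices, the path `p v w 0, p v w 1, …, p v w (3k+1)`
replacing the edge `vw` (so `p v w 0 = ι v`, `p v w (3k+1) = ι w`, the `3k`
internal vertices are new, pairwise distinct, distinct for distinct edges of `G`,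
and the edges of `H` are exactly the consecutive pairs of these paths).
For `k = 0` the subdivision is `G` itself. -/
def IsSubdivision {V W : Type*} (G : SimpleGraph V) (k : ℕ) (H : SimpleGraph W)
    (ι : V → W) (p : V → V → ℕ → W) : Prop :=
  Function.Injective ι ∧
  (∀ v w, G.Adj v w → p v w 0 = ι v ∧ p v w (3 * k + 1) = ι w) ∧
  (∀ v w, G.Adj v w → ∀ i ≤ 3 * k + 1, p v w i = p w v (3 * k + 1 - i)) ∧
  (∀ v w, G.Adj v w → ∀ i ≤ 3 * k + 1, ∀ j ≤ 3 * k + 1, p v w i = p v w j → i = j) ∧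
  (∀ v w, G.Adj v w → ∀ i, 0 < i → i < 3 * k + 1 → p v w i ∉ Set.range ι) ∧
  (∀ v w v' w', G.Adj v w → G.Adj v' w' → ∀ i j, 0 < i → i < 3 * k + 1 →
      0 < j → j < 3 * k + 1 → p v w i = p v' w' j → s(v, w) = s(v', w')) ∧
  (∀ x : W, (∃ v, x = ι v) ∨
      ∃ v w i, G.Adj v w ∧ 0 < i ∧ i < 3 * k + 1 ∧ x = p v w i) ∧
  (∀ x y : W, H.Adj x y ↔ ∃ v w i, G.Adj v w ∧ i ≤ 3 * k ∧
      ((x = p v w i ∧ y = p v w (i + 1)) ∨ (y = p v w i ∧ x = p v w (i + 1))))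

/-- The edge set `S(e)` of the path of the subdivision replacing the edge
`e = vw` of `G`: the edges `e_0, e_1, …, e_{3k}`. -/
def pathEdges {V W : Type*} (p : V → V → ℕ → W) (k : ℕ) (v w : V) :
    Set (Sym2 W) :=
  {e | ∃ i ≤ 3 * k, e = s(p v w i, p v w (i + 1))}

/-- `D` is an efficient edge dominating set of `G`. -/
def IsEEDS {V : Type*} (G : SimpleGraph V) (D : Set (Sym2 V)) : Prop :=
  D ⊆ G.edgeSet ∧ ∀ f ∈ G.edgeSet, ∃! e, e ∈ D ∧ edgeDom e f

/-- `G` is `r`-regular: every vertex has exactly `r` neighbors. -/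
def IsRegular' {V : Type*} (G : SimpleGraph V) (r : ℕ) : Prop :=
  ∀ v : V, (G.neighborSet v).ncard = r

def ed {V W : Type*} (p : V → V → ℕ → W) (v w : V) (i : ℕ) : Sym2 W :=
  s(p v w i, p v w (i + 1))

section sub
variable {V W : Type*} {G : SimpleGraph V} {k : ℕ} {H : SimpleGraph W} {ι : V → W}
  {p : V → V → ℕ → W}

theorem ed_symm (hs : IsSubdivision G k H ι p) {v w : V} (h : G.Adj v w) {i : ℕ}
    (hi : i ≤ 3 * k) : ed p v w i = ed p w v (3 * k - i) := by
  obtain ⟨-, -, h3, -⟩ := hs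
  unfold ed
  rw [h3 v w h i (by omega), h3 v w h (i+1) (by omega), Sym2.eq_swap,
    show 3 * k + 1 - i = 3 * k - i + 1 by omega, show 3 * k + 1 - (i + 1) = 3 * k - i by omega]

theorem ed_mem (hs : IsSubdivision G k H ι p) {v w : V} (h : G.Adj v w) {i : ℕ}
    (hi : i ≤ 3 * k) : ed p v w i ∈ H.edgeSet := by
  obtain ⟨-, -, -, -, -, -, -, h8⟩ := hs
  exact (h8 _ _).2 ⟨v, w, i, h, hi, Or.inl ⟨rfl, rfl⟩⟩

theorem ed_surj (hs : IsSubdivision G k H ι p) {e : Sym2 W} (he : e ∈ H.edgeSet) :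
    ∃ v w i, G.Adj v w ∧ i ≤ 3 * k ∧ e = ed p v w i := by
  obtain ⟨-, -, -, -, -, -, -, h8⟩ := hs
  induction e with | _ x y =>
  obtain ⟨v, w, i, h, hi, h' | h'⟩ := (h8 x y).1 he
  · exact ⟨v, w, i, h, hi, by rw [h'.1, h'.2]; rfl⟩
  · exact ⟨v, w, i, h, hi, by rw [h'.1, h'.2, Sym2.eq_swap]; rfl⟩

theorem vx_int (hs : IsSubdivision G k H ι p) {v w v' w' : V} (h : G.Adj v w)
    (h' : G.Adj v' w') {i j : ℕ} (hi : 0 < i) (hi' : i < 3 * k + 1) (hj : j ≤ 3 * k + 1)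
    (e : p v w i = p v' w' j) :
    (v' = v ∧ w' = w ∧ j = i) ∨ (v' = w ∧ w' = v ∧ j = 3 * k + 1 - i) := by
  obtain ⟨-, h2, h3, h4, h5, h6, -, -⟩ := hs
  have n := h5 v w h i hi hi'
  have j0 : j ≠ 0 := by
    rintro rfl; rw [e, (h2 _ _ h').1] at n; exact n ⟨_, rfl⟩
  have j1 : j ≠ 3 * k + 1 := by
    rintro rfl; rw [e, (h2 _ _ h').2] at n; exact n ⟨_, rfl⟩
  have := h6 v w v' w' h h' i j hi hi' (by omega) (by omega) e
  rw [Sym2.eq_iff] at this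
  obtain ⟨rfl, rfl⟩ | ⟨rfl, rfl⟩ := this
  · exact Or.inl ⟨rfl, rfl, (h4 _ _ h _ (by omega) _ (by omega) e).symm⟩
  · rw [h3 w v h' j hj] at e
    have := h4 _ _ h _ (by omega) _ (by omega) e
    exact Or.inr ⟨rfl, rfl, by omega⟩

theorem vx_ext (hs : IsSubdivision G k H ι p) {v v' w' : V}
    (h' : G.Adj v' w') {j : ℕ} (hj : j ≤ 3 * k + 1)
    (e : ι v = p v' w' j) :
    (v' = v ∧ j = 0) ∨ (w' = v ∧ j = 3 * k + 1) := by
  obtain ⟨h1, h2, h3, h4, h5, h6, -, -⟩ := hs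
  have n := h5 v' w' h' j
  by_cases j0 : j = 0
  · subst j0; rw [(h2 _ _ h').1] at e; exact Or.inl ⟨(h1 e).symm, rfl⟩
  by_cases j1 : j = 3 * k + 1
  · subst j1; rw [(h2 _ _ h').2] at e; exact Or.inr ⟨(h1 e).symm, rfl⟩
  exact absurd ⟨_, e⟩ (n (by omega) (by omega))

theorem inc_int (hs : IsSubdivision G k H ι p) {v w : V} (h : G.Adj v w) {i : ℕ}
    (hi : i < 3 * k) {e : Sym2 W} (he : e ∈ H.edgeSet) (hx : p v w (i + 1) ∈ e) :
    e = ed p v w i ∨ e = ed p v w (i + 1) := by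
  obtain ⟨v', w', j, h', hj, rfl⟩ := ed_surj hs he
  have key : ∃ j', (j' = j ∨ j' = j + 1) ∧ p v w (i + 1) = p v' w' j' := by
    rcases Sym2.mem_iff.1 hx with h0 | h0
    · exact ⟨_, Or.inl rfl, h0⟩
    · exact ⟨_, Or.inr rfl, h0⟩
  obtain ⟨j', hj', e⟩ := key
  rcases vx_int hs h h' (by omega) (by omega) (by omega) e with ⟨rfl, rfl, r⟩ | ⟨rfl, rfl, r⟩
  · rcases hj' with rfl | rfl
    · right; rw [r]
    · left; congr 1; omega
  · rw [ed_symm hs h' hj]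
    rcases hj' with rfl | rfl
    · left; congr 1; omega
    · right; congr 1; omega

theorem inc_ext (hs : IsSubdivision G k H ι p) {v : V}
    {e : Sym2 W} (he : e ∈ H.edgeSet) (hx : ι v ∈ e) :
    ∃ u, G.Adj v u ∧ e = ed p v u 0 := by
  obtain ⟨v', w', j, h', hj, rfl⟩ := ed_surj hs he
  rcases Sym2.mem_iff.1 hx with h0 | h0
  · rcases vx_ext hs h' (by omega) h0 with ⟨rfl, rfl⟩ | ⟨rfl, r⟩
    · exact ⟨_, h', rfl⟩
    · omega
  · rcases vx_ext hs h' (by omega) h0 with ⟨rfl, r⟩ | ⟨rfl, r⟩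
    · omega
    · refine ⟨_, h'.symm, ?_⟩
      rw [ed_symm hs h' hj]; congr 1; omega

theorem ed_inj (hs : IsSubdivision G k H ι p) {v w v' w' : V} (h : G.Adj v w)
    (h' : G.Adj v' w') {i j : ℕ} (hi : i ≤ 3 * k) (hj : j ≤ 3 * k)
    (e : ed p v w i = ed p v' w' j) :
    (v' = v ∧ w' = w ∧ j = i) ∨ (v' = w ∧ w' = v ∧ j = 3 * k - i) := by
  have h2 := hs.2.1
  rcases Sym2.eq_iff.1 e with ⟨a, b⟩ | ⟨a, b⟩
  · by_cases i0 : i = 0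
    · subst i0
      rw [(h2 _ _ h).1] at a
      by_cases k0 : k = 0
      · subst k0
        have : j = 0 := by omega
        subst this
        rw [show (0:ℕ)+1 = 3*0+1 by rfl, (h2 _ _ h).2] at b
        have := vx_ext hs h' (by omega) a
        have := vx_ext hs h' (by omega) b
        grind
      · have := vx_int hs h h' (by omega) (by omega) (by omega) b
        have := vx_ext hs h' (by omega) a
        grind
    · have h1 := vx_int hs h h' (by omega) (by omega) (by omega) a
      by_cases i1 : i = 3 * k
      · subst i1
        rw [(h2 _ _ h).2] at b
        have := vx_ext hs h' (by omega) b
        have := h.ne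
        grind
      · have := vx_int hs h h' (by omega) (by omega) (by omega) b
        have := h.ne
        grind
  · by_cases i0 : i = 0
    · subst i0
      rw [(h2 _ _ h).1] at a
      by_cases k0 : k = 0
      · subst k0
        have : j = 0 := by omega
        subst this
        rw [show (0:ℕ)+1 = 3*0+1 by rfl, (h2 _ _ h).2] at b
        have := vx_ext hs h' (by omega) a
        have := vx_ext hs h' (by omega) b
        grind
      · have := vx_int hs h h' (by omega) (by omega) (by omega) b
        have := vx_ext hs h' (by omega) a
        grind
    · have h1 := vx_int hs h h' (by omega) (by omega) (by omega) a
      by_cases i1 : i = 3 * k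
      · subst i1
        rw [(h2 _ _ h).2] at b
        have := vx_ext hs h' (by omega) b
        have := h.ne
        grind
      · have := vx_int hs h h' (by omega) (by omega) (by omega) b
        have := h.ne
        grind

open Classical in
/-- number of `P`-edges on the path of `vw` -/
noncomputable def cnt (p : V → V → ℕ → W) (k : ℕ) (P : Set (Sym2 W)) (v w : V) : ℕ :=
  ∑ i ∈ Finset.range (3 * k + 1), if ed p v w i ∈ P then 1 else 0

theorem cnt_symm (hs : IsSubdivision G k H ι p) (P : Set (Sym2 W)) {v w : V} (h : G.Adj v w) :
    cnt p k P v w = cnt p k P w v := by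
  classical
  unfold cnt
  rw [← Finset.sum_range_reflect]
  refine Finset.sum_congr rfl fun i hi => ?_
  rw [Finset.mem_range] at hi
  rw [ed_symm hs h (by omega)]
  congr 3; omega

open Classical in
theorem card_P [Fintype V] [Fintype W] (hs : IsSubdivision G k H ι p) (P : Set (Sym2 W))
    (hP : P ⊆ H.edgeSet) :
    2 * P.ncard = ∑ v, ∑ w, if G.Adj v w then cnt p k P v w else 0 := by
  let T : Finset (V × V × ℕ) :=
    ((Finset.univ : Finset V) ×ˢ (Finset.univ : Finset V) ×ˢ Finset.range (3 * k + 1)).filter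
      fun t => G.Adj t.1 t.2.1 ∧ ed p t.1 t.2.1 t.2.2 ∈ P
  have hT : T.card = ∑ v, ∑ w, if G.Adj v w then cnt p k P v w else 0 := by
    simp only [T, Finset.card_filter, Finset.sum_product]
    refine Finset.sum_congr rfl fun v _ => Finset.sum_congr rfl fun w _ => ?_
    by_cases h : G.Adj v w <;> simp [h, cnt]
  have hc := Finset.card_eq_sum_card_fiberwise (s := T) (f := fun t => ed p t.1 t.2.1 t.2.2)
    (t := P.toFinset) (by intro t ht; simp [T] at ht ⊢; exact ht.2.2)
  rw [← hT, Set.ncard_eq_toFinset_card' P, hc, Finset.sum_const_nat (m := 2), mul_comm]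
  intro e he
  rw [Set.mem_toFinset] at he
  obtain ⟨v, w, i, h, hi, rfl⟩ := ed_surj hs (hP he)
  rw [Finset.card_eq_two]
  refine ⟨(v, w, i), (w, v, 3 * k - i), ?_, ?_⟩
  · intro q; exact h.ne (congrArg Prod.fst q)
  · ext ⟨v', w', j⟩
    simp only [T, Finset.mem_filter, Finset.mem_product, Finset.mem_univ, true_and,
      Finset.mem_range, Finset.mem_insert, Finset.mem_singleton, Prod.mk.injEq]
    constructor
    · rintro ⟨⟨hj, h', -⟩, e⟩
      exact ed_inj hs h h' hi (by omega) e.symm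
    · rintro (⟨rfl, rfl, rfl⟩ | ⟨rfl, rfl, rfl⟩)
      · exact ⟨⟨by omega, h, he⟩, rfl⟩
      · rw [← ed_symm hs h hi]
        exact ⟨⟨by omega, h.symm, he⟩, rfl⟩

end sub

theorem seq_lb (a : ℕ → ℕ) (ha : ∀ i, a i ≤ 1) (k : ℕ) :
    (∀ i < 3 * k + 1, a (i + 1) = 0 → a i + a (i + 2) = 1) →
    k ≤ (∑ i ∈ Finset.range (3 * k + 1), a (i + 1)) ∧
    (a 1 = 1 → k + 1 ≤ ∑ i ∈ Finset.range (3 * k + 1), a (i + 1)) ∧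
    ((∑ i ∈ Finset.range (3 * k + 1), a (i + 1)) = k →
      a (3 * k + 1) = 0 ∧ a 0 + a (3 * k + 2) = 1) := by
  induction k with
  | zero =>
    intro h
    have := h 0 (by omega)
    simp
    refine ⟨fun h => by omega, fun h => ⟨h, this h⟩⟩
  | succ k ih =>
    intro h
    obtain ⟨h1, h2, h3⟩ := ih (fun i hi => h i (by omega))
    have e : ∑ i ∈ Finset.range (3 * (k + 1) + 1), a (i + 1) =
      (∑ i ∈ Finset.range (3 * k + 1), a (i + 1)) + a (3 * k + 2) + a (3 * k + 3)
        + a (3 * k + 4) := by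
      rw [show 3 * (k + 1) + 1 = 3 * k + 1 + 1 + 1 + 1 by ring, Finset.sum_range_succ,
        Finset.sum_range_succ, Finset.sum_range_succ]
    rw [e]
    generalize (∑ i ∈ Finset.range (3 * k + 1), a (i + 1)) = S at *
    have b1 := h (3 * k + 1) (by omega)
    have b2 := h (3 * k + 2) (by omega)
    have b3 := h (3 * k + 3) (by omega)
    have c1 := ha (3 * k + 2)
    have c2 := ha (3 * k + 3)
    have c3 := ha (3 * k + 4)
    have c4 := ha (3 * k + 5)
    have c5 := ha (3 * k + 1)
    have c6 := ha 0
    rw [show 3 * (k + 1) + 1 = 3 * k + 4 by ring, show 3 * (k + 1) + 2 = 3 * k + 5 by ring]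
    simp only [add_assoc, Nat.reduceAdd] at *
    refine ⟨by omega, by omega, fun h => by omega⟩

/-- exactly one `P`-edge at `x` -/
def D1 {W : Type*} (P : Set (Sym2 W)) (x : W) : Prop := ∃! e, e ∈ P ∧ x ∈ e

theorem peds_xor {W : Type*} {H : SimpleGraph W} {P : Set (Sym2 W)} (hP : IsPEDS H P) {x y : W}
    (h : s(x, y) ∈ H.edgeSet) (hn : s(x, y) ∉ P) :
    (D1 P x ∧ ∀ e ∈ P, y ∉ e) ∨ (D1 P y ∧ ∀ e ∈ P, x ∉ e) := by
  obtain ⟨e, ⟨he, z, hz, hz'⟩, hu⟩ := hP.2 _ h hn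
  have hxy : x ≠ y := H.ne_of_adj h
  have hx : ∀ f ∈ P, x ∈ f → f = e := fun f hf hxf => hu f ⟨hf, x, hxf, by simp⟩
  have hy : ∀ f ∈ P, y ∈ f → f = e := fun f hf hxf => hu f ⟨hf, y, hxf, by simp⟩
  have hb : ¬ (x ∈ e ∧ y ∈ e) := fun q => hn (((Sym2.mem_and_mem_iff hxy).1 q) ▸ he)
  rcases Sym2.mem_iff.1 hz' with rfl | rfl
  · exact Or.inl ⟨⟨e, ⟨he, hz⟩, fun f hf => hx f hf.1 hf.2⟩,
      fun f hf hyf => hb ⟨hz, hy f hf hyf ▸ hyf⟩⟩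
  · exact Or.inr ⟨⟨e, ⟨he, hz⟩, fun f hf => hy f hf.1 hf.2⟩,
      fun f hf hyf => hb ⟨hx f hf hyf ▸ hyf, hz⟩⟩

theorem peds_of {W : Type*} {H : SimpleGraph W} {P : Set (Sym2 W)} (hP : P ⊆ H.edgeSet)
    (h : ∀ x y, s(x, y) ∈ H.edgeSet → s(x, y) ∉ P →
      (D1 P x ∧ ∀ e ∈ P, y ∉ e) ∨ (D1 P y ∧ ∀ e ∈ P, x ∉ e)) : IsPEDS H P := by
  refine ⟨hP, fun f => ?_⟩
  induction f with | _ x y =>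
  intro hf hn
  rcases h x y hf hn with ⟨⟨e, ⟨he, hx⟩, hu⟩, hno⟩ | ⟨⟨e, ⟨he, hx⟩, hu⟩, hno⟩
  · refine ⟨e, ⟨he, x, hx, by simp⟩, ?_⟩
    rintro g ⟨hg, z, hz, hz'⟩
    rcases Sym2.mem_iff.1 hz' with rfl | rfl
    · exact hu g ⟨hg, hz⟩
    · exact absurd hz (hno g hg)
  · refine ⟨e, ⟨he, y, hx, by simp⟩, ?_⟩
    rintro g ⟨hg, z, hz, hz'⟩
    rcases Sym2.mem_iff.1 hz' with rfl | rfl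
    · exact absurd hz (hno g hg)
    · exact hu g ⟨hg, hz⟩

section sub2
variable {V W : Type*} {G : SimpleGraph V} {k : ℕ} {H : SimpleGraph W} {ι : V → W}
  {p : V → V → ℕ → W}

open Classical in
theorem cnt_lb (hs : IsSubdivision G k H ι p) {P : Set (Sym2 W)} (hP : IsPEDS H P) {v w : V}
    (h : G.Adj v w) :
    k ≤ cnt p k P v w ∧ (ed p v w 0 ∈ P → k + 1 ≤ cnt p k P v w) ∧
    (cnt p k P v w = k → (if D1 P (ι v) then 1 else 0) + (if D1 P (ι w) then 1 else 0) = 1) := by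
  let a : ℕ → ℕ := fun i => if i = 0 then (if D1 P (ι v) then 1 else 0) else
    if i = 3 * k + 2 then (if D1 P (ι w) then 1 else 0) else
    if ed p v w (i - 1) ∈ P then 1 else 0
  have ha : ∀ i, a i ≤ 1 := by intro i; simp only [a]; split_ifs <;> omega
  have hmid : ∀ i < 3 * k + 1, a (i + 1) = if ed p v w i ∈ P then 1 else 0 := by
    intro i hi
    simp only [a]
    rw [if_neg (by omega), if_neg (by omega)]; simp
  have key := seq_lb a ha k ?_
  · have e : cnt p k P v w = ∑ i ∈ Finset.range (3 * k + 1), a (i + 1) := by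
      unfold cnt
      exact Finset.sum_congr rfl fun i hi => (hmid i (Finset.mem_range.1 hi)).symm
    rw [← e] at key
    refine ⟨key.1, fun q => key.2.1 ?_, fun q => ?_⟩
    · rw [hmid 0 (by omega), if_pos q]
    · have := (key.2.2 q).2
      simpa [a] using this
  · intro i hi h0
    rw [hmid i hi] at h0
    have hn : ed p v w i ∉ P := by
      intro q; simp [q] at h0
    have he := ed_mem hs h (i := i) (by omega)
    have hx := peds_xor hP he hn
    have d1no : ∀ x, (∀ e ∈ P, x ∉ e) → ¬ D1 P x := by
      rintro x hx ⟨e, ⟨h1, h2⟩, -⟩; exact hx e h1 h2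
    have l1 : a i = if D1 P (p v w i) then 1 else 0 := by
      cases i with
      | zero => simp [a, (hs.2.1 v w h).1]
      | succ i =>
        rw [hmid i (by omega)]
        congr 1
        refine propext ⟨fun q => ⟨_, ⟨q, Sym2.mem_mk_right _ _⟩, ?_⟩, ?_⟩
        · rintro f ⟨hf, hxf⟩
          rcases inc_int hs h (by omega) (hP.1 hf) hxf with rfl | rfl
          · rfl
          · exact absurd hf hn
        · rintro ⟨f, ⟨hf, hxf⟩, -⟩
          rcases inc_int hs h (by omega) (hP.1 hf) hxf with rfl | rfl
          · exact hf
          · exact absurd hf hn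
    have l2 : a (i + 2) = if D1 P (p v w (i + 1)) then 1 else 0 := by
      by_cases hi3 : i = 3 * k
      · subst hi3; simp [a, (hs.2.1 v w h).2]
      · rw [hmid (i + 1) (by omega)]
        congr 1
        refine propext ⟨fun q => ⟨_, ⟨q, Sym2.mem_mk_left _ _⟩, ?_⟩, ?_⟩
        · rintro f ⟨hf, hxf⟩
          rcases inc_int hs h (by omega) (hP.1 hf) hxf with rfl | rfl
          · exact absurd hf hn
          · rfl
        · rintro ⟨f, ⟨hf, hxf⟩, -⟩
          rcases inc_int hs h (by omega) (hP.1 hf) hxf with rfl | rfl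
          · exact absurd hf hn
          · exact hf
    rw [l1, l2]
    rcases hx with ⟨q1, q2⟩ | ⟨q1, q2⟩
    · rw [if_pos q1, if_neg (d1no _ q2)]
    · rw [if_pos q1, if_neg (d1no _ q2)]

theorem ii_iff_iii :
    (∃ Y : Set V, (∀ u v : V, u ∉ Y → v ∉ Y → ¬ G.Adj u v) ∧
        (∀ u ∈ Y, ∃! v, v ∈ Y ∧ G.Adj u v)) ↔
      (∃ D : Set (Sym2 V), IsEEDS G D) := by
  constructor
  · rintro ⟨Y, h1, h2⟩
    have hmem : ∀ e ∈ {e | e ∈ G.edgeSet ∧ ∀ x ∈ e, x ∈ Y}, ∀ x ∈ e, ∀ y, y ∈ Y ∧ G.Adj x y →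
        e = s(x, y) := by
      rintro e ⟨he, hY⟩ x hx y hy
      obtain ⟨z, rfl⟩ := Sym2.mem_iff_exists.1 hx
      obtain ⟨q, -, hq⟩ := h2 x (hY x hx)
      rw [hq z ⟨hY z (by simp), he⟩, hq y hy]
    refine ⟨{e | e ∈ G.edgeSet ∧ ∀ x ∈ e, x ∈ Y}, fun e he => he.1, fun f => ?_⟩
    have main : ∀ x y, G.Adj x y → x ∈ Y → ∃! e, e ∈ {e | e ∈ G.edgeSet ∧ ∀ x ∈ e, x ∈ Y} ∧
        edgeDom e s(x, y) := by
      intro x y h hx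
      obtain ⟨z, ⟨hz, hxz⟩, hu⟩ := h2 x hx
      refine ⟨s(x, z), ⟨⟨hxz, by simp [hx, hz]⟩, x, by simp, by simp⟩, ?_⟩
      rintro g ⟨hg, t, ht, ht'⟩
      rcases Sym2.mem_iff.1 ht' with rfl | rfl
      · exact hmem g hg t ht z ⟨hz, hxz⟩
      · have hy := hg.2 _ ht
        rw [hmem g hg t ht x ⟨hx, h.symm⟩, hu t ⟨hy, h⟩, Sym2.eq_swap]
    induction f with | _ x y =>
    intro hf
    by_cases hx : x ∈ Y
    · exact main x y hf hx
    · by_cases hy : y ∈ Y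
      · rw [Sym2.eq_swap]; exact main y x hf.symm hy
      · exact absurd hf (h1 x y hx hy)
  · rintro ⟨D, hD, h⟩
    refine ⟨{x | ∃ e ∈ D, x ∈ e}, ?_, ?_⟩
    · intro u v hu hv huv
      obtain ⟨e, ⟨he, z, hz, hz'⟩, -⟩ := h s(u, v) huv
      rcases Sym2.mem_iff.1 hz' with rfl | rfl
      · exact hu ⟨e, he, hz⟩
      · exact hv ⟨e, he, hz⟩
    · rintro u ⟨e, he, hu⟩
      obtain ⟨v, rfl⟩ := Sym2.mem_iff_exists.1 hu
      refine ⟨v, ⟨⟨_, he, by simp⟩, hD he⟩, ?_⟩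
      rintro w ⟨⟨f, hf, hw⟩, huw⟩
      have q := (h s(u, w) huw).unique ⟨he, u, by simp, by simp⟩ ⟨hf, w, hw, by simp⟩
      rw [← q] at hw
      rcases Sym2.mem_iff.1 hw with rfl | rfl
      · exact absurd huw (G.loopless.irrefl _)
      · rfl

end sub2

section sub3
variable {V W : Type*} {G : SimpleGraph V} {k : ℕ} {H : SimpleGraph W} {ι : V → W}
  {p : V → V → ℕ → W}

def TT (Y : Set V) (v w : V) (i : ℕ) : Prop :=
  (v ∈ Y ∧ w ∈ Y ∧ i % 3 = 0) ∨ (v ∉ Y ∧ w ∈ Y ∧ i % 3 = 1) ∨ (v ∈ Y ∧ w ∉ Y ∧ i % 3 = 2)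

def Sat (Y : Set V) (v w : V) (i : ℕ) : Prop :=
  (v ∈ Y ∧ w ∈ Y ∧ i % 3 ≠ 2) ∨ (v ∉ Y ∧ w ∈ Y ∧ i % 3 ≠ 0) ∨ (v ∈ Y ∧ w ∉ Y ∧ i % 3 ≠ 1)

def PP (G : SimpleGraph V) (k : ℕ) (p : V → V → ℕ → W) (Y : Set V) : Set (Sym2 W) :=
  {e | ∃ v w i, G.Adj v w ∧ i ≤ 3 * k ∧ TT Y v w i ∧ e = ed p v w i}

theorem TT_symm {Y : Set V} {v w : V} {i : ℕ} (hi : i ≤ 3 * k) (h : TT Y v w i) :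
    TT Y w v (3 * k - i) := by
  unfold TT at *
  rcases h with ⟨a, b, c⟩ | ⟨a, b, c⟩ | ⟨a, b, c⟩
  · exact Or.inl ⟨b, a, by omega⟩
  · exact Or.inr (Or.inr ⟨b, a, by omega⟩)
  · exact Or.inr (Or.inl ⟨b, a, by omega⟩)

theorem PP_mem (hs : IsSubdivision G k H ι p) (Y : Set V) {v w : V} (h : G.Adj v w) {i : ℕ}
    (hi : i ≤ 3 * k) : ed p v w i ∈ PP G k p Y ↔ TT Y v w i := by
  constructor
  · rintro ⟨v', w', j, h', hj, ht, e⟩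
    rcases ed_inj hs h' h hj hi e.symm with ⟨rfl, rfl, rfl⟩ | ⟨rfl, rfl, rfl⟩
    · exact ht
    · exact TT_symm hj ht
  · intro ht; exact ⟨v, w, i, h, hi, ht, rfl⟩

theorem PP_sub (hs : IsSubdivision G k H ι p) (Y : Set V) : PP G k p Y ⊆ H.edgeSet := by
  rintro _ ⟨v, w, i, h, hi, -, rfl⟩
  exact ed_mem hs h hi

theorem PP_ext (hs : IsSubdivision G k H ι p) {Y : Set V}
    (h2 : ∀ u ∈ Y, ∃! v, v ∈ Y ∧ G.Adj u v) (v : V) :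
    (v ∈ Y → D1 (PP G k p Y) (ι v)) ∧ (v ∉ Y → ∀ e ∈ PP G k p Y, ι v ∉ e) := by
  constructor
  · intro hv
    obtain ⟨w, ⟨hw, h⟩, hu⟩ := h2 v hv
    refine ⟨ed p v w 0, ⟨(PP_mem hs Y h (by omega)).2 (Or.inl ⟨hv, hw, rfl⟩), ?_⟩, ?_⟩
    · rw [← (hs.2.1 v w h).1]; exact Sym2.mem_mk_left _ _
    · rintro f ⟨hf, hx⟩
      obtain ⟨u, hu', rfl⟩ := inc_ext hs (PP_sub hs Y hf) hx
      rw [PP_mem hs Y hu' (by omega)] at hf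
      have : u ∈ Y := by
        unfold TT at hf; simp at hf; exact hf.2
      rw [hu u ⟨this, hu'⟩]
  · intro hv f hf hx
    obtain ⟨u, hu', rfl⟩ := inc_ext hs (PP_sub hs Y hf) hx
    rw [PP_mem hs Y hu' (by omega)] at hf
    unfold TT at hf; simp at hf; exact hv hf.1

theorem PP_sat (hs : IsSubdivision G k H ι p) {Y : Set V}
    (h1 : ∀ u v : V, u ∉ Y → v ∉ Y → ¬ G.Adj u v)
    (h2 : ∀ u ∈ Y, ∃! v, v ∈ Y ∧ G.Adj u v) {v w : V} (h : G.Adj v w) {i : ℕ}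
    (hi : i ≤ 3 * k + 1) :
    (Sat Y v w i → D1 (PP G k p Y) (p v w i)) ∧
    (¬ Sat Y v w i → ∀ e ∈ PP G k p Y, p v w i ∉ e) := by
  have hvw := fun a b => h1 v w a b h
  by_cases i0 : i = 0
  · subst i0
    rw [(hs.2.1 v w h).1]
    have e : Sat Y v w 0 ↔ v ∈ Y := by unfold Sat; simp; tauto
    rw [e]; exact PP_ext hs h2 v
  by_cases i1 : i = 3 * k + 1
  · subst i1
    rw [(hs.2.1 v w h).2]
    have e : Sat Y v w (3 * k + 1) ↔ w ∈ Y := by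
      unfold Sat
      have : (3 * k + 1) % 3 = 1 := by omega
      rw [this]; simp; tauto
    rw [e]; exact PP_ext hs h2 w
  obtain ⟨j, rfl⟩ : ∃ j, i = j + 1 := ⟨i - 1, by omega⟩
  have m1 := PP_mem hs Y h (i := j) (by omega)
  have m2 := PP_mem hs Y h (i := j + 1) (by omega)
  have hinc := fun f hf => inc_int hs h (i := j) (by omega) (PP_sub hs Y (a := f) hf)
  have hS : (Sat Y v w (j + 1) ↔ TT Y v w j ∨ TT Y v w (j + 1)) ∧
      ¬ (TT Y v w j ∧ TT Y v w (j + 1)) := by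
    unfold Sat TT
    by_cases a : v ∈ Y <;> by_cases b : w ∈ Y <;> simp [a, b] <;> omega
  constructor
  · intro q
    rcases hS.1.1 q with q | q
    · refine ⟨_, ⟨m1.2 q, Sym2.mem_mk_right _ _⟩, ?_⟩
      rintro f ⟨hf, hx⟩
      rcases hinc f hf hx with rfl | rfl
      · rfl
      · exact absurd ⟨q, m2.1 hf⟩ hS.2
    · refine ⟨_, ⟨m2.2 q, Sym2.mem_mk_left _ _⟩, ?_⟩
      rintro f ⟨hf, hx⟩
      rcases hinc f hf hx with rfl | rfl
      · exact absurd ⟨m1.1 hf, q⟩ hS.2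
      · rfl
  · intro q f hf hx
    rcases hinc f hf hx with rfl | rfl
    · exact q (hS.1.2 (Or.inl (m1.1 hf)))
    · exact q (hS.1.2 (Or.inr (m2.1 hf)))

theorem PP_peds (hs : IsSubdivision G k H ι p) {Y : Set V}
    (h1 : ∀ u v : V, u ∉ Y → v ∉ Y → ¬ G.Adj u v)
    (h2 : ∀ u ∈ Y, ∃! v, v ∈ Y ∧ G.Adj u v) : IsPEDS H (PP G k p Y) := by
  refine peds_of (PP_sub hs Y) fun x y hxy hn => ?_
  obtain ⟨v, w, i, h, hi, e⟩ := ed_surj hs hxy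
  rw [e, PP_mem hs Y h hi] at hn
  have s1 := PP_sat hs h1 h2 h (i := i) (by omega)
  have s2 := PP_sat hs h1 h2 h (i := i + 1) (by omega)
  have hx : (Sat Y v w i ∧ ¬ Sat Y v w (i + 1)) ∨ (Sat Y v w (i + 1) ∧ ¬ Sat Y v w i) := by
    have hvw := fun a b => h1 v w a b h
    revert hn
    unfold Sat TT
    by_cases a : v ∈ Y <;> by_cases b : w ∈ Y <;> simp [a, b] <;> first | omega | exact absurd b (fun b => hvw a b)
  rcases Sym2.eq_iff.1 e with ⟨rfl, rfl⟩ | ⟨rfl, rfl⟩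
  · rcases hx with ⟨a, b⟩ | ⟨a, b⟩
    · exact Or.inl ⟨s1.1 a, s2.2 b⟩
    · exact Or.inr ⟨s2.1 a, s1.2 b⟩
  · rcases hx with ⟨a, b⟩ | ⟨a, b⟩
    · exact Or.inr ⟨s1.1 a, s2.2 b⟩
    · exact Or.inl ⟨s2.1 a, s1.2 b⟩

theorem cnt_mod (k : ℕ) :
    (∑ i ∈ Finset.range (3 * k + 1), if i % 3 = 0 then 1 else 0) = k + 1 ∧
    (∑ i ∈ Finset.range (3 * k + 1), if i % 3 = 1 then 1 else 0) = k ∧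
    (∑ i ∈ Finset.range (3 * k + 1), if i % 3 = 2 then 1 else 0) = k := by
  induction k with
  | zero => decide
  | succ k ih =>
    rw [show 3 * (k + 1) + 1 = 3 * k + 1 + 1 + 1 + 1 by ring]
    simp only [Finset.sum_range_succ (n := 3 * k + 1 + 1 + 1),
      Finset.sum_range_succ (n := 3 * k + 1 + 1), Finset.sum_range_succ (n := 3 * k + 1), ih]
    have e1 : (3 * k + 1) % 3 = 1 := by omega
    have e2 : (3 * k + 1 + 1) % 3 = 2 := by omega
    have e3 : (3 * k + 1 + 1 + 1) % 3 = 0 := by omega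
    rw [e1, e2, e3]; simp

open Classical in
theorem PP_cnt (hs : IsSubdivision G k H ι p) {Y : Set V}
    (h1 : ∀ u v : V, u ∉ Y → v ∉ Y → ¬ G.Adj u v) {v w : V} (h : G.Adj v w) :
    cnt p k (PP G k p Y) v w = k + if v ∈ Y ∧ w ∈ Y then 1 else 0 := by
  have hvw := fun a b => h1 v w a b h
  have e : cnt p k (PP G k p Y) v w =
      ∑ i ∈ Finset.range (3 * k + 1), if TT Y v w i then 1 else 0 := by
    unfold cnt
    refine Finset.sum_congr rfl fun i hi => ?_
    rw [Finset.mem_range] at hi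
    rw [PP_mem hs Y h (by omega)]
  rw [e]
  obtain ⟨c0, c1, c2⟩ := cnt_mod k
  unfold TT
  by_cases a : v ∈ Y <;> by_cases b : w ∈ Y
  · simpa [a, b] using c0
  · simpa [a, b] using c2
  · simpa [a, b] using c1
  · exact absurd b (fun b => hvw a b)

open Classical in
theorem deg_sum [Fintype V] {r : ℕ} (hreg : IsRegular' G r) (v : V) :
    (∑ w, if G.Adj v w then 1 else 0) = r := by
  rw [← hreg v, Set.ncard_eq_toFinset_card', ← Finset.card_filter]
  congr 1; ext w; simp

open Classical in
theorem ii_to_i [Fintype V] [Fintype W] {r : ℕ} (hr : 1 ≤ r) (hreg : IsRegular' G r)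
    (hs : IsSubdivision G k H ι p) {Y : Set V}
    (h1 : ∀ u v : V, u ∉ Y → v ∉ Y → ¬ G.Adj u v)
    (h2 : ∀ u ∈ Y, ∃! v, v ∈ Y ∧ G.Adj u v) :
    ((PP G k p Y).ncard : ℚ) =
          ((Fintype.card V : ℚ) * r) / (2 * (2 * r - 1)) * (2 * r * k - k + 1) := by
  have hc := card_P hs (PP G k p Y) (PP_sub hs Y)
  let y : V → ℕ := fun v => if v ∈ Y then 1 else 0
  let g : V → V → ℕ := fun v w => if G.Adj v w then 1 else 0
  have hg : ∀ v, ∑ w, g v w = r := deg_sum hreg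
  have hgs : ∀ v w, g v w = g w v := fun v w => by simp only [g, G.adj_comm]
  have e1 : ∀ v w, (if G.Adj v w then cnt p k (PP G k p Y) v w else 0) =
      g v w * k + g v w * y v * y w := by
    intro v w
    by_cases h : G.Adj v w
    · rw [if_pos h, PP_cnt hs h1 h]
      by_cases a : v ∈ Y <;> by_cases b : w ∈ Y <;> simp [g, y, h, a, b]
    · simp [g, h]
  have e2 : ∀ v, ∑ w, g v w * y v * y w = y v := by
    intro v
    by_cases a : v ∈ Y
    · obtain ⟨u, ⟨hu, hvu⟩, huu⟩ := h2 v a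
      rw [Finset.sum_eq_single u]
      · simp [g, y, a, hu, hvu]
      · intro b _ hb
        by_contra hne
        apply hb
        apply huu
        by_cases q1 : G.Adj v b <;> by_cases q2 : b ∈ Y <;> simp [g, y, q1, q2] at hne ⊢
      · simp
    · simp [y, a]
  have e3 : ∀ v w, g v w + g v w * y v * y w = g v w * y v + g v w * y w := by
    intro v w
    have := h1 v w
    by_cases h : G.Adj v w
    · by_cases a : v ∈ Y <;> by_cases b : w ∈ Y <;> simp [g, y, h, a, b]
      exact this a b h
    · simp [g, h]
  have t1 : 2 * (PP G k p Y).ncard = Fintype.card V * r * k + ∑ v, y v := by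
    rw [hc]
    simp only [e1, Finset.sum_add_distrib, e2, ← Finset.sum_mul, hg]
    simp
  have t2 : Fintype.card V * r + ∑ v, y v = r * (∑ v, y v) + r * (∑ v, y v) := by
    have : ∑ v, ∑ w, (g v w + g v w * y v * y w) = ∑ v, ∑ w, (g v w * y v + g v w * y w) := by
      simp only [e3]
    simp only [Finset.sum_add_distrib, e2, hg] at this
    rw [Finset.sum_comm (f := fun v w => g v w * y w)] at this
    have e4 : ∀ w, ∑ v, g v w * y w = r * y w := by
      intro w
      rw [← Finset.sum_mul]; congr 1
      rw [← hg w]; exact Finset.sum_congr rfl fun v _ => hgs v w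
    simp only [e4, ← Finset.sum_mul, hg, ← Finset.mul_sum] at this
    simpa using this
  generalize (∑ v, y v) = S at *
  have r1 : (1 : ℚ) ≤ r := by exact_mod_cast hr
  have t1' : (2 : ℚ) * ((PP G k p Y).ncard : ℚ) = Fintype.card V * r * k + S := by exact_mod_cast t1
  have t2' : (Fintype.card V : ℚ) * r + S = r * S + r * S := by exact_mod_cast t2
  have : (2 * (r : ℚ) - 1) ≠ 0 := by linarith
  rw [div_mul_eq_mul_div, eq_div_iff (by positivity)]
  linear_combination (2 * (r : ℚ) - 1) * t1' - t2'

open Classical in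
theorem i_to_ii [Fintype V] [Fintype W] {r : ℕ} (hr : 1 ≤ r) (hreg : IsRegular' G r)
    (hs : IsSubdivision G k H ι p) {P : Set (Sym2 W)} (hP : IsPEDS H P)
    (hcard : (P.ncard : ℚ) =
          ((Fintype.card V : ℚ) * r) / (2 * (2 * r - 1)) * (2 * r * k - k + 1)) :
    ∃ Y : Set V, (∀ u v : V, u ∉ Y → v ∉ Y → ¬ G.Adj u v) ∧
        (∀ u ∈ Y, ∃! v, v ∈ Y ∧ G.Adj u v) := by
  rcases hr.eq_or_lt with rfl | hr2
  · refine ⟨Set.univ, by simp, fun u _ => ?_⟩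
    obtain ⟨w, hw⟩ := Set.ncard_eq_one.1 (hreg u)
    have hw' : ∀ z, G.Adj u z ↔ z = w := fun z => by
      rw [← G.mem_neighborSet, hw, Set.mem_singleton_iff]
    exact ⟨w, ⟨trivial, (hw' w).2 rfl⟩, fun z hz => (hw' z).1 hz.2⟩
  have hc := card_P hs P hP.1
  let Y : Set V := {v | D1 P (ι v)}
  let y : V → ℤ := fun v => if D1 P (ι v) then 1 else 0
  let g : V → V → ℤ := fun v w => if G.Adj v w then 1 else 0
  let bad : V → V → Prop := fun v w => G.Adj v w ∧ cnt p k P v w ≠ k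
  let b : V → V → ℤ := fun v w => if bad v w then 1 else 0
  let bd : V → ℤ := fun v => ∑ w, b v w
  have hg : ∀ v, ∑ w, g v w = r := by
    intro v; rw [← deg_sum hreg v]; push_cast; rfl
  have hgs : ∀ v w, g v w = g w v := fun v w => by simp only [g, G.adj_comm]
  have hbad : ∀ v w, bad v w → bad w v := by
    rintro v w ⟨h, q⟩; exact ⟨h.symm, by rwa [← cnt_symm hs P h]⟩
  have hbs : ∀ v w, b v w = b w v := fun v w => by
    simp only [b]; congr 1; exact propext ⟨hbad v w, hbad w v⟩
  have hlow : ∀ v w, g v w * k + b v w ≤ ((if G.Adj v w then cnt p k P v w else 0 : ℕ) : ℤ) := by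
    intro v w
    by_cases h : G.Adj v w
    · have := (cnt_lb hs hP h).1
      by_cases q : cnt p k P v w = k
      · simp [g, b, bad, h, q]
      · simp only [g, b, bad, h, q]; simp; omega
    · simp [g, b, bad, h]
  have hgood : ∀ v w, g v w - b v w = (g v w - b v w) * y v + (g v w - b v w) * y w := by
    intro v w
    by_cases h : G.Adj v w
    · by_cases q : cnt p k P v w = k
      · have q' := (cnt_lb hs hP h).2.2 q
        have : y v + y w = 1 := by simp only [y]; exact_mod_cast q'
        rw [← mul_add, this, mul_one]
      · simp [g, b, bad, h, q]
    · simp [g, b, bad, h]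
  have b0 : ∀ v w, 0 ≤ b v w := fun v w => by simp only [b]; split_ifs <;> omega
  have bd0 : ∀ v, 0 ≤ bd v := fun v => Finset.sum_nonneg fun w _ => b0 v w
  have hB : ∀ v, D1 P (ι v) → 1 ≤ bd v := by
    rintro v ⟨e, ⟨he, hx⟩, -⟩
    obtain ⟨u, hu, rfl⟩ := inc_ext hs (hP.1 he) hx
    have hb : b v u = 1 := by
      have := (cnt_lb hs hP hu).2.1 he
      simp only [b, bad]; rw [if_pos ⟨hu, by omega⟩]
    rw [← hb]
    exact Finset.single_le_sum (fun w _ => b0 v w) (Finset.mem_univ u)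
  set n := Fintype.card V with hn
  set B : ℤ := ∑ v, bd v with hBdef
  have s1 : (n : ℤ) * r * k + B ≤ 2 * P.ncard := by
    have := Finset.sum_le_sum fun v (_ : v ∈ Finset.univ) =>
      Finset.sum_le_sum fun w (_ : w ∈ Finset.univ) => hlow v w
    simp only [Finset.sum_add_distrib, ← Finset.sum_mul, hg] at this
    have h' : (2 * P.ncard : ℤ) =
      ∑ v, ∑ w, ((if G.Adj v w then cnt p k P v w else 0 : ℕ) : ℤ) := by exact_mod_cast hc
    rw [h']
    refine le_trans (le_of_eq ?_) this
    simp [hBdef, bd, hn]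
  have s2 : (n : ℤ) * r - B = 2 * ∑ v, y v * (r - bd v) := by
    have : ∑ v, ∑ w, (g v w - b v w) =
        ∑ v, ∑ w, ((g v w - b v w) * y v + (g v w - b v w) * y w) :=
      Finset.sum_congr rfl fun v _ => Finset.sum_congr rfl fun w _ => hgood v w
    simp only [Finset.sum_add_distrib] at this
    rw [Finset.sum_comm (f := fun v w => (g v w - b v w) * y w)] at this
    have e4 : ∀ w, ∑ v, (g v w - b v w) * y w = y w * (r - bd w) := by
      intro w
      rw [← Finset.sum_mul, mul_comm]; congr 1
      rw [← hg w, ← Finset.sum_sub_distrib]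
      exact Finset.sum_congr rfl fun v _ => by rw [hgs v w, hbs v w]
    have e5 : ∀ v, ∑ w, (g v w - b v w) * y v = y v * (r - bd v) := by
      intro w
      rw [← Finset.sum_mul, mul_comm]; congr 1
      rw [← hg w, ← Finset.sum_sub_distrib]
    simp only [e4, e5, Finset.sum_sub_distrib, hg] at this
    rw [two_mul, ← Finset.sum_sub_distrib, ← Finset.sum_add_distrib] at *
    simp only [Finset.sum_add_distrib] at this ⊢
    rw [← this]; simp [hBdef, bd, hn]
  have s3 : (2 * (r : ℤ) - 1) * (2 * P.ncard) = n * r * (k * (2 * r - 1) + 1) := by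
    have r1 : (1 : ℚ) ≤ r := by exact_mod_cast hr
    have h0 : (2 * (r : ℚ) - 1) ≠ 0 := by linarith
    rw [div_mul_eq_mul_div, eq_div_iff (by positivity)] at hcard
    have : (2 * (r : ℚ) - 1) * (2 * P.ncard) = n * r * (k * (2 * r - 1) + 1) := by
      linear_combination hcard
    exact_mod_cast this
  have rz : (2 : ℤ) ≤ r := by exact_mod_cast hr2
  have s4 : (2 * (r : ℤ) - 1) * B ≤ n * r := by
    have := mul_le_mul_of_nonneg_left s1 (show (0 : ℤ) ≤ 2 * r - 1 by linarith)
    linarith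
  let c : V → ℤ := fun v => (r - 1) * bd v - y v * (r - bd v)
  have c0 : ∀ v, 0 ≤ c v := by
    intro v
    by_cases h : D1 P (ι v)
    · have := hB v h
      simp only [c, y, h, if_true]
      nlinarith
    · simp only [c, y, h, if_false]
      have := bd0 v
      nlinarith
  have cs : ∑ v, c v = 0 := by
    apply le_antisymm _ (Finset.sum_nonneg fun v _ => c0 v)
    simp only [c, Finset.sum_sub_distrib, ← Finset.mul_sum]
    rw [← hBdef]
    linarith
  have cz : ∀ v, c v = 0 := fun v =>
    (Finset.sum_eq_zero_iff_of_nonneg (fun v _ => c0 v)).1 cs v (Finset.mem_univ v)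
  have hY1 : ∀ v ∈ Y, bd v = 1 := by
    intro v hv
    have h := cz v
    have hv' : D1 P (ι v) := hv
    simp only [c, y, hv', if_true] at h
    have : (r : ℤ) * (bd v - 1) = 0 := by linarith
    rcases mul_eq_zero.1 this with q | q <;> omega
  have hY0 : ∀ v, v ∉ Y → ∀ w, ¬ bad v w := by
    intro v hv w hb
    have h := cz v
    have hv' : ¬ D1 P (ι v) := hv
    simp only [c, y, hv', if_false] at h
    have : ((r : ℤ) - 1) * bd v = 0 := by linarith
    rcases mul_eq_zero.1 this with q | q
    · omega
    · have := (Finset.sum_eq_zero_iff_of_nonneg (fun w _ => b0 v w)).1 q w (Finset.mem_univ w)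
      simp [b, hb] at this
  have hgd : ∀ u v, G.Adj u v → ¬ bad u v → (u ∈ Y ↔ v ∉ Y) := by
    intro u v h hb
    have q : cnt p k P u v = k := by
      by_contra q; exact hb ⟨h, q⟩
    have := (cnt_lb hs hP h).2.2 q
    simp only [Y, Set.mem_setOf_eq]
    by_cases a : D1 P (ι u) <;> by_cases b : D1 P (ι v) <;> simp [a, b] at this ⊢
  refine ⟨Y, ?_, ?_⟩
  · intro u v hu hv h
    exact hu ((hgd u v h (hY0 u hu v)).2 hv)
  · intro u hu
    have h1 := hY1 u hu
    have h2 : (Finset.univ.filter fun w => bad u w).card = 1 := by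
      have : (((Finset.univ.filter fun w => bad u w).card : ℕ) : ℤ) = 1 := by
        rw [Finset.card_filter]; push_cast; exact h1
      exact_mod_cast this
    obtain ⟨w, hw⟩ := Finset.card_eq_one.1 h2
    have hw' : ∀ z, bad u z ↔ z = w := fun z => by
      have := congrArg (z ∈ ·) hw
      simpa using this
    have hbw := (hw' w).2 rfl
    refine ⟨w, ⟨?_, hbw.1⟩, ?_⟩
    · by_contra q
      exact hY0 w q u (hbad _ _ hbw)
    · rintro z ⟨hz, huz⟩
      rw [← hw']
      by_contra q
      exact (hgd u z huz q).1 hu hz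

end sub3

/-- For an `r`-regular graph `G` (`r ≥ 1`) on `n` vertices and its
`3k`-subdivision `S(G)`, the following are equivalent:
(i) `S(G)` has a perfect edge dominating set of size exactly
`(n r / (2 (2r - 1))) (2rk - k + 1)`;
(ii) the vertices of `G` can be 2-colored with colors `W`, `Y` (here given by the
set `Y` of yellow vertices) so that no two `W`-vertices are adjacent and every
`Y`-vertex has exactly one `Y`-neighbor;
(iii) `G` admits an efficient edge dominating set. -/
theorem subdivision_peds_tfae {V W : Type*} [Fintype V] [Fintype W]
    (r : ℕ) (hr : 1 ≤ r) (G : SimpleGraph V) (hreg : IsRegular' G r) (k : ℕ)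
    (H : SimpleGraph W) (ι : V → W) (p : V → V → ℕ → W)
    (hsub : IsSubdivision G k H ι p) :
    ((∃ P : Set (Sym2 W), IsPEDS H P ∧
        (P.ncard : ℚ) =
          ((Fintype.card V : ℚ) * r) / (2 * (2 * r - 1)) * (2 * r * k - k + 1)) ↔
      (∃ Y : Set V, (∀ u v : V, u ∉ Y → v ∉ Y → ¬ G.Adj u v) ∧
        (∀ u ∈ Y, ∃! v, v ∈ Y ∧ G.Adj u v))) ∧
    ((∃ Y : Set V, (∀ u v : V, u ∉ Y → v ∉ Y → ¬ G.Adj u v) ∧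
        (∀ u ∈ Y, ∃! v, v ∈ Y ∧ G.Adj u v)) ↔
      (∃ D : Set (Sym2 V), IsEEDS G D)) := by
  refine ⟨⟨?_, ?_⟩, ii_iff_iii⟩
  · rintro ⟨P, hP, hc⟩
    exact i_to_ii hr hreg hsub hP hc
  · rintro ⟨Y, h1, h2⟩
    exact ⟨PP G k p Y, PP_peds hsub h1 h2, ii_to_i hr hreg hsub h1 h2⟩
end

section
/- Every connected finite simple graph contains a vertex of eccentricity at most 2 or an induced subgraph isomorphic to the path on 5 vertices. -/
theorem p5_aux {V : Type*} (G : SimpleGraph V) (a b c d e : V)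
    (h1 : G.Adj a b) (h2 : G.Adj b c) (h3 : G.Adj c d) (h4 : G.Adj d e)
    (n1 : ¬ G.Adj a c) (n2 : ¬ G.Adj a d) (n3 : ¬ G.Adj a e)
    (n4 : ¬ G.Adj b d) (n5 : ¬ G.Adj b e) (n6 : ¬ G.Adj c e) :
    Nonempty (SimpleGraph.pathGraph 5 ↪g G) := by
  have m1 := mt G.adj_symm n1
  have m2 := mt G.adj_symm n2
  have m3 := mt G.adj_symm n3
  have m4 := mt G.adj_symm n4
  have m5 := mt G.adj_symm n5
  have m6 := mt G.adj_symm n6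
  have key : ∀ i j : Fin 5, G.Adj (![a,b,c,d,e] i) (![a,b,c,d,e] j) ↔
      (SimpleGraph.pathGraph 5).Adj i j := by
    intro i j
    rw [SimpleGraph.pathGraph_adj]
    fin_cases i <;> fin_cases j <;>
      simp [h1, h2, h3, h4, h1.symm, h2.symm, h3.symm, h4.symm, n1, n2, n3, n4, n5, n6,
        m1, m2, m3, m4, m5, m6]
  refine ⟨⟨⟨![a,b,c,d,e], ?_⟩, fun {i j} => key i j⟩⟩
  intro i j hij
  have h : ∀ k, (SimpleGraph.pathGraph 5).Adj i k ↔ (SimpleGraph.pathGraph 5).Adj j k := by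
    intro k
    rw [← key, ← key, hij]
  simp only [SimpleGraph.pathGraph_adj] at h
  clear hij
  revert i j
  decide

/-- The closed ball of radius two. -/
def ballTwo {V : Type*} (G : SimpleGraph V) (v : V) : Set V :=
  {u | u = v ∨ G.Adj v u ∨ ∃ c, G.Adj v c ∧ G.Adj c u}

/-- Every connected finite graph contains a vertex of eccentricity at most `2`
(a principal vertex) or an induced path on `5` vertices. -/
theorem principal_or_p5 {V : Type*} [Fintype V] (G : SimpleGraph V)
    (hconn : G.Connected) :
    (∃ v : V, ∀ u : V, G.dist v u ≤ 2) ∨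
    Nonempty (SimpleGraph.pathGraph 5 ↪g G) := by
  by_contra hcon
  rw [not_or] at hcon
  obtain ⟨hA, hP⟩ := hcon
  have hne : Nonempty V := hconn.nonempty
  obtain ⟨v, hv⟩ := Finite.exists_max (fun v => (ballTwo G v).ncard)
  obtain ⟨y, hy⟩ : ∃ y, y ∉ ballTwo G v := by
    by_contra hall
    push Not at hall
    apply hA
    refine ⟨v, fun u => ?_⟩
    rcases hall u with rfl | h | ⟨c, h, h'⟩
    · simp
    · exact (SimpleGraph.dist_le h.toWalk).trans (by simp)
    · exact (SimpleGraph.dist_le (SimpleGraph.Walk.cons h h'.toWalk)).trans (by simp)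
  obtain ⟨p⟩ := hconn.preconnected v y
  obtain ⟨dd, -, hb, hx⟩ := p.exists_boundary_dart (ballTwo G v) (Or.inl rfl) hy
  have hbx : G.Adj dd.fst dd.snd := dd.adj
  generalize dd.fst = b0 at *
  generalize dd.snd = x at *
  have hx' : ∀ c, G.Adj v c → ¬ G.Adj c x := fun c h h' => hx (Or.inr (Or.inr ⟨c, h, h'⟩))
  have hxv : ¬ G.Adj v x := fun h => hx (Or.inr (Or.inl h))
  obtain ⟨a0, ha0, hab0⟩ : ∃ a, G.Adj v a ∧ G.Adj a b0 := by
    rcases hb with rfl | h | h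
    · exact (hxv hbx).elim
    · exact (hx' _ h hbx).elim
    · exact h
  let C : Set V := {a | G.Adj v a ∧ ∃ b, G.Adj a b ∧ G.Adj b x}
  let S : V → Set V := fun a => {w | G.Adj a w ∧ w ≠ v ∧ ¬ G.Adj v w}
  obtain ⟨a, ⟨hva, b, hab, hbx'⟩, hmax⟩ :=
    Set.exists_max_image C (fun a => (S a).ncard) (Set.toFinite C) ⟨a0, ha0, b0, hab0, hbx⟩
  have hsub : ballTwo G v ⊆ ballTwo G a := by
    intro u hu
    by_contra hua
    have hau : ¬ G.Adj a u := fun h => hua (Or.inr (Or.inl h))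
    have hau2 : ∀ w, G.Adj a w → ¬ G.Adj w u := fun w h h' => hua (Or.inr (Or.inr ⟨w, h, h'⟩))
    have huv : u ≠ v := by rintro rfl; exact hau hva.symm
    have hvu : ¬ G.Adj v u := hau2 v hva.symm
    obtain ⟨c, hvc, hcu⟩ : ∃ c, G.Adj v c ∧ G.Adj c u := by
      rcases hu with h | h | h
      · exact (huv h).elim
      · exact (hvu h).elim
      · exact h
    have hac : ¬ G.Adj a c := fun h => hau2 c h hcu
    have hS : S a ⊆ S c := by
      rintro w ⟨haw, hwv, hvw⟩
      refine ⟨?_, hwv, hvw⟩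
      by_contra hcw
      exact hP (p5_aux G w a v c u haw.symm hva.symm hvc hcu (fun h => hvw h.symm)
        (fun h => hcw h.symm) (hau2 w haw) hac hau hvu)
    have hbS : b ∈ S a := by
      refine ⟨hab, ?_, fun h => hx' b h hbx'⟩
      rintro rfl
      exact hxv hbx'
    have hcC : c ∈ C := ⟨hvc, b, (hS hbS).1, hbx'⟩
    have hlt : (S a).ncard < (S c).ncard := by
      apply Set.ncard_lt_ncard _ (Set.toFinite _)
      exact (Set.ssubset_iff_of_subset hS).2 ⟨u, ⟨hcu, huv, hvu⟩, fun h => hau h.1⟩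
    exact absurd (hmax c hcC) (not_le.2 hlt)
  have hlt : (ballTwo G v).ncard < (ballTwo G a).ncard := by
    apply Set.ncard_lt_ncard _ (Set.toFinite _)
    exact (Set.ssubset_iff_of_subset hsub).2 ⟨x, Or.inr (Or.inr ⟨b, hab, hbx'⟩), hx⟩
  exact absurd (hv a) (not_le.2 hlt)
end

section
/- Let G be a finite simple graph, D a dominating set of G, P a perfect edge dominating set of G, and (B,Y,W) the 3-coloring associated to P. If D ⊆ B, then P = E(G), the trivial perfect edge dominating set. -/
/-- A black vertex: incident to at least two edges of `P`. -/
def Blackv {V : Type*} (P : Set (Sym2 V)) (v : V) : Prop :=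
  ∃ e ∈ P, ∃ f ∈ P, e ≠ f ∧ v ∈ e ∧ v ∈ f

/-- A yellow vertex: incident to exactly one edge of `P`. -/
def Yellowv {V : Type*} (P : Set (Sym2 V)) (v : V) : Prop := ∃! e, e ∈ P ∧ v ∈ e

/-- A white vertex: incident to no edge of `P`. -/
def Whitev {V : Type*} (P : Set (Sym2 V)) (v : V) : Prop := ∀ e ∈ P, v ∉ e


/-- `D` is a (vertex) dominating set of `G`: every vertex is in `D` or adjacent
to a vertex of `D`. -/
def IsDominating {V : Type*} (G : SimpleGraph V) (D : Set V) : Prop :=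
  ∀ v : V, v ∈ D ∨ ∃ u ∈ D, G.Adj u v

/-- If a dominating set `D` consists of black vertices of a perfect edge
dominating set `P`, then `P` is the trivial perfect edge dominating set `E(G)`. -/
theorem dominating_black_trivial {V : Type*} [Fintype V] (G : SimpleGraph V)
    (D : Set V) (hD : IsDominating G D) (P : Set (Sym2 V)) (hP : IsPEDS G P)
    (hblack : ∀ v ∈ D, Blackv P v) : P = G.edgeSet := by
  have key : ∀ a b, G.Adj a b → Blackv P a → s(a, b) ∈ P := by
    intro a b hab ⟨e, he, f, hf, hne, hae, haf⟩
    by_contra hn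
    obtain ⟨g, _, hu⟩ := hP.2 s(a, b) hab hn
    exact hne ((hu e ⟨he, a, hae, by simp⟩).trans (hu f ⟨hf, a, haf, by simp⟩).symm)
  refine Set.Subset.antisymm hP.1 ?_
  intro e
  induction e using Sym2.ind with
  | _ u v =>
    intro huv
    have hadj : G.Adj u v := huv
    by_contra hn
    have hu : u ∉ D := fun h => hn (key u v hadj (hblack u h))
    have hv : v ∉ D := fun h => hn (Sym2.eq_swap ▸ key v u hadj.symm (hblack v h))
    obtain ⟨c, hc, hcu⟩ := (hD u).resolve_left hu
    obtain ⟨d, hd, hdv⟩ := (hD v).resolve_left hv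
    obtain ⟨g, _, hg⟩ := hP.2 s(u, v) huv hn
    have h1 := hg s(c, u) ⟨key c u hcu (hblack c hc), u, by simp, by simp⟩
    have h2 := hg s(d, v) ⟨key d v hdv (hblack d hd), v, by simp, by simp⟩
    have h3 := h1.trans h2.symm
    rcases Sym2.eq_iff.1 h3 with ⟨_, h⟩ | ⟨h, _⟩
    · exact hadj.ne h
    · exact hv (h ▸ hc)
end

section
/- Let G be a connected finite simple graph that has a dominating clique on p vertices with p ≥ 4. Then G has exactly one perfect edge dominating set, namely the trivial one E(G). -/
theorem dominating_clique_unique_peds {V : Type*} [Fintype V] (G : SimpleGraph V)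
    (hconn : G.Connected) (D : Finset V) (hclique : G.IsClique (D : Set V))
    (hdom : IsDominating G (D : Set V)) (hcard : 4 ≤ D.card) :
    ∀ P : Set (Sym2 V), IsPEDS G P ↔ P = G.edgeSet := by
  classical
  intro P
  constructor
  swap
  · rintro rfl
    exact ⟨subset_rfl, fun f hf hn => absurd hf hn⟩
  rintro ⟨hsub, hP⟩
  have hA : ∀ u v, G.Adj u v → (∃ e ∈ P, u ∈ e) → (∃ e ∈ P, v ∈ e) → s(u, v) ∈ P := by
    rintro u v huv ⟨e, he, hue⟩ ⟨e', he', hve⟩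
    by_contra hn
    have hu := (hP s(u, v) huv hn).unique ⟨he, u, hue, by simp⟩ ⟨he', v, hve, by simp⟩
    subst hu
    exact hn (((Sym2.mem_and_mem_iff huv.ne).1 ⟨hue, hve⟩) ▸ he)
  have hB : ∀ u a b v, a ≠ b → s(u, a) ∈ P → s(u, b) ∈ P → G.Adj u v → s(u, v) ∈ P := by
    intro u a b v hab ha hb huv
    by_contra hn
    have h := (hP s(u, v) huv hn).unique ⟨ha, u, by simp, by simp⟩ ⟨hb, u, by simp, by simp⟩
    exact hab (Sym2.congr_right.1 h)
  have hC : ∀ u v, G.Adj u v → (∃ e ∈ P, u ∈ e) ∨ (∃ e ∈ P, v ∈ e) := by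
    intro u v huv
    by_cases hn : s(u, v) ∈ P
    · exact Or.inl ⟨_, hn, by simp⟩
    obtain ⟨e, ⟨he, w, hw, hw'⟩, -⟩ := hP s(u, v) huv hn
    rcases Sym2.mem_iff.1 hw' with rfl | rfl
    · exact Or.inl ⟨e, he, hw⟩
    · exact Or.inr ⟨e, he, hw⟩
  have h1 : (D.filter (fun v => ¬ ∃ e ∈ P, v ∈ e)).card ≤ 1 := by
    rw [Finset.card_le_one]
    intro a ha b hb
    rw [Finset.mem_filter] at ha hb
    by_contra hab
    rcases hC a b (hclique ha.1 hb.1 hab) with h | h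
    · exact ha.2 h
    · exact hb.2 h
  have h2 := D.card_filter_add_card_filter_not (fun v => ∃ e ∈ P, v ∈ e)
  have h3 : 2 < (D.filter (fun v => ∃ e ∈ P, v ∈ e)).card := by omega
  obtain ⟨a, ha, b, hb, c, hc, hab, hac, hbc⟩ := Finset.two_lt_card.1 h3
  rw [Finset.mem_filter] at ha hb hc
  have hD : ∀ d ∈ D, ∃ e ∈ P, d ∈ e := by
    intro d hd
    by_cases had : a = d
    · exact had ▸ ha.2
    refine ⟨s(a, d), hB a b c d hbc ?_ ?_ (hclique ha.1 hd had), by simp⟩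
    · exact hA _ _ (hclique ha.1 hb.1 hab) ha.2 hb.2
    · exact hA _ _ (hclique ha.1 hc.1 hac) ha.2 hc.2
  have hall : ∀ v, ∃ e ∈ P, v ∈ e := by
    intro v
    rcases hdom v with hv | ⟨u, hu, huv⟩
    · exact hD v hv
    have key : ∀ x ∈ D, u ≠ x → s(u, x) ∈ P := fun x hx hux =>
      hA _ _ (hclique hu hx hux) (hD u hu) (hD x hx)
    refine ⟨s(u, v), ?_, by simp⟩
    by_cases hua : u = a
    · exact hB u b c v hbc (key b hb.1 (hua ▸ hab)) (key c hc.1 (hua ▸ hac)) huv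
    by_cases hub : u = b
    · exact hB u a c v hac (key a ha.1 hua) (key c hc.1 (hub ▸ hbc)) huv
    · exact hB u a b v hab (key a ha.1 hua) (key b hb.1 hub) huv
  refine Set.Subset.antisymm hsub ?_
  intro e he
  induction e using Sym2.ind with
  | _ u v => exact hA u v he (hall u) (hall v)
end

section
/- Let G be a connected P5-free finite simple graph that admits a perfect edge dominating set P with P ≠ E(G). Then G has a dominating triangle (a dominating clique on 3 vertices) or a dominating induced P3 (three vertices a, b, c with ab and bc edges, ac a non-edge, forming a dominating set). -/
/-- A graph is `P₅`-free if it contains no induced subgraph isomorphic to the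
path on `5` vertices. -/
def P5Free {V : Type*} (G : SimpleGraph V) : Prop :=
  IsEmpty (SimpleGraph.pathGraph 5 ↪g G)

open Classical in
theorem p5_contra {V : Type*} {G : SimpleGraph V} (hfree : P5Free G) (p0 p1 p2 p3 p4 : V)
    (h01 : G.Adj p0 p1) (h12 : G.Adj p1 p2) (h23 : G.Adj p2 p3) (h34 : G.Adj p3 p4)
    (h02 : ¬ G.Adj p0 p2) (h03 : ¬ G.Adj p0 p3) (h04 : ¬ G.Adj p0 p4)
    (h13 : ¬ G.Adj p1 p3) (h14 : ¬ G.Adj p1 p4) (h24 : ¬ G.Adj p2 p4) : False := by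
  have key : ∀ i j : Fin 5, G.Adj (![p0, p1, p2, p3, p4] i) (![p0, p1, p2, p3, p4] j) ↔
      (SimpleGraph.pathGraph 5).Adj i j := by
    intro i j
    rw [SimpleGraph.pathGraph_adj]
    fin_cases i <;> fin_cases j <;> simp <;>
      first | assumption | (apply SimpleGraph.Adj.symm; assumption) | (intro h; have := h.symm; contradiction)
  have inj : Function.Injective ![p0, p1, p2, p3, p4] := by
    have a := h01.ne
    have b := h12.ne
    have c := h23.ne
    have d := h34.ne
    have e : p0 ≠ p2 := by rintro rfl; exact h03 h23
    have f : p0 ≠ p3 := by rintro rfl; exact h04 h34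
    have g : p0 ≠ p4 := by rintro rfl; exact h03 h34.symm
    have h : p1 ≠ p3 := by rintro rfl; exact h14 h34
    have i : p1 ≠ p4 := by rintro rfl; exact h04 h01
    have j : p2 ≠ p4 := by rintro rfl; exact h14 h12
    intro x y hxy
    fin_cases x <;> fin_cases y <;> simp at hxy ⊢ <;> grind
  exact hfree.false ⟨⟨_, inj⟩, fun {i j} => key i j⟩

/-- closed neighbourhood membership -/
def Nb {V : Type*} (G : SimpleGraph V) (D : Set V) (v : V) : Prop :=
  v ∈ D ∨ ∃ u ∈ D, G.Adj u v

def GoodP3 {V : Type*} (G : SimpleGraph V) (a b c : V) : Prop :=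
  G.Adj a b ∧ G.Adj b c ∧ ¬ G.Adj a c ∧ a ≠ c

def Good {V : Type*} (G : SimpleGraph V) (D : Set V) : Prop :=
  (D.Nonempty ∧ G.IsClique D) ∨ ∃ a b c, GoodP3 G a b c ∧ D = {a, b, c}

theorem nb3 {V : Type*} (G : SimpleGraph V) (a b c v : V) :
    Nb G {a, b, c} v ↔ (v = a ∨ v = b ∨ v = c ∨ G.Adj a v ∨ G.Adj b v ∨ G.Adj c v) := by
  simp [Nb]; tauto

theorem good_tri {V : Type*} {G : SimpleGraph V} {a b c : V} (h1 : G.Adj a b) (h2 : G.Adj a c)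
    (h3 : G.Adj b c) : Good G {a, b, c} := by
  left
  refine ⟨⟨a, by simp⟩, ?_⟩
  intro x hx y hy hxy
  simp at hx hy
  have := h1.symm
  have := h2.symm
  have := h3.symm
  grind

theorem stepB {V : Type*} {G : SimpleGraph V} (hfree : P5Free G) {a b c v w : V}
    (h : GoodP3 G a b c) (hv : ¬ Nb G {a, b, c} v) (hwv : G.Adj v w)
    (hb : G.Adj w b) (ha : ¬ G.Adj w a) (hc : ¬ G.Adj w c) :
    GoodP3 G b w v ∧ ∀ u, (Nb G {a, b, c} u ∨ u = v) → Nb G {b, w, v} u := by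
  simp only [nb3] at *
  obtain ⟨hab, hbc, hac, hne⟩ := h
  refine ⟨⟨hb.symm, hwv.symm, by tauto, by grind⟩, ?_⟩
  intro u hu
  by_contra hcon
  have hsym := G.adj_comm
  have k1 := p5_contra hfree u a b w v
  have k2 := p5_contra hfree u c b w v
  grind

theorem stepAC {V : Type*} {G : SimpleGraph V} (hfree : P5Free G) {a b c v w : V}
    (h : GoodP3 G a b c) (hv : ¬ Nb G {a, b, c} v) (hwv : G.Adj v w)
    (hb : ¬ G.Adj w b) (ha : G.Adj w a) (hc : G.Adj w c) :
    ∃ X, Good G X ∧ ∀ u, (Nb G {a, b, c} u ∨ u = v) → Nb G X u := by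
  by_cases hd : ∀ u, (Nb G {a, b, c} u ∨ u = v) → Nb G {a, w, c} u
  · exact ⟨_, Or.inr ⟨a, w, c, ⟨ha.symm, hc, h.2.2.1, h.2.2.2⟩, rfl⟩, hd⟩
  push Not at hd
  obtain ⟨u, hu, hnu⟩ := hd
  have hsym := G.adj_comm
  have : G.Adj v u ∧ G.Adj u b ∧ ¬ G.Adj u a ∧ ¬ G.Adj u c := by
    simp only [nb3] at *
    obtain ⟨hab, hbc, hac, hne⟩ := h
    have k1 := p5_contra hfree u b a w v
    grind
  obtain ⟨h1, h2, h3, h4⟩ := this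
  obtain ⟨q1, q2⟩ := stepB hfree h hv h1 h2 h3 h4
  exact ⟨_, Or.inr ⟨_, _, _, q1, rfl⟩, q2⟩

theorem stepAB {V : Type*} {G : SimpleGraph V} (hfree : P5Free G) {a b c v w : V}
    (h : GoodP3 G a b c) (hv : ¬ Nb G {a, b, c} v) (hwv : G.Adj v w)
    (hb : G.Adj w b) (ha : G.Adj w a) (hc : ¬ G.Adj w c) :
    ∃ X, Good G X ∧ ∀ u, (Nb G {a, b, c} u ∨ u = v) → Nb G X u := by
  refine ⟨{w, a, b}, good_tri ha hb h.1, ?_⟩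
  intro u hu
  by_contra hnu
  have hsym := G.adj_comm
  simp only [nb3] at *
  obtain ⟨hab, hbc, hac, hne⟩ := h
  have k1 := p5_contra hfree v w b c u
  have k2 := p5_contra hfree v u c b a
  grind

theorem stepABC {V : Type*} {G : SimpleGraph V} (hfree : P5Free G) {a b c v w : V}
    (h : GoodP3 G a b c) (hv : ¬ Nb G {a, b, c} v) (hwv : G.Adj v w)
    (hb : G.Adj w b) (ha : G.Adj w a) (hc : G.Adj w c) :
    ∃ X, Good G X ∧ ∀ u, (Nb G {a, b, c} u ∨ u = v) → Nb G X u := by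
  by_cases hd : ∀ u, (Nb G {a, b, c} u ∨ u = v) → Nb G {w, a, b} u
  · exact ⟨_, good_tri ha hb h.1, hd⟩
  by_cases hd' : ∀ u, (Nb G {a, b, c} u ∨ u = v) → Nb G {w, b, c} u
  · exact ⟨_, good_tri hb hc h.2.1, hd'⟩
  push Not at hd hd'
  obtain ⟨u, hu, hnu⟩ := hd
  obtain ⟨x, hx, hnx⟩ := hd'
  exfalso
  have hsym := G.adj_comm
  simp only [nb3] at *
  obtain ⟨hab, hbc, hac, hne⟩ := h
  have k1 := p5_contra hfree v u c b a
  have k2 := p5_contra hfree v x a b c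
  have k3 := p5_contra hfree x a b c u
  have k4 := p5_contra hfree u x a w v
  grind

theorem stepP3 {V : Type*} {G : SimpleGraph V} (hfree : P5Free G) {a b c v w : V}
    (h : GoodP3 G a b c) (hv : ¬ Nb G {a, b, c} v) (hwv : G.Adj v w)
    (hw : Nb G {a, b, c} w) :
    ∃ X, Good G X ∧ ∀ u, (Nb G {a, b, c} u ∨ u = v) → Nb G X u := by
  have hsym := G.adj_comm
  have h' : GoodP3 G c b a := ⟨h.2.1.symm, h.1.symm, fun x => h.2.2.1 x.symm, h.2.2.2.symm⟩
  have hset : ({a, b, c} : Set V) = {c, b, a} := by ext; simp; tauto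
  have hv' := hv
  rw [hset] at hv'
  by_cases ha : G.Adj w a <;> by_cases hb : G.Adj w b <;> by_cases hc : G.Adj w c
  · exact stepABC hfree h hv hwv hb ha hc
  · exact stepAB hfree h hv hwv hb ha hc
  · exact stepAC hfree h hv hwv hb ha hc
  · exfalso
    have k := p5_contra hfree v w a b c
    simp only [nb3] at *
    obtain ⟨hab, hbc, hac, hne⟩ := h
    grind
  · rw [hset]
    exact stepAB hfree h' hv' hwv hb hc ha
  · obtain ⟨q1, q2⟩ := stepB hfree h hv hwv hb ha hc
    exact ⟨_, Or.inr ⟨_, _, _, q1, rfl⟩, q2⟩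
  · exfalso
    have k := p5_contra hfree v w c b a
    simp only [nb3] at *
    obtain ⟨hab, hbc, hac, hne⟩ := h
    grind
  · exfalso
    simp only [nb3] at *
    grind

theorem stepClique {V : Type*} {G : SimpleGraph V} (hfree : P5Free G) {X : Set V} {v w : V}
    (h : G.IsClique X) (hv : ¬ Nb G X v) (hwv : G.Adj v w) (hw : Nb G X w) :
    ∃ Y, Good G Y ∧ ∀ u, (Nb G X u ∨ u = v) → Nb G Y u := by
  have hsym := G.adj_comm
  have hvX : ∀ x ∈ X, ¬ G.Adj x v ∧ x ≠ v := by
    intro x hx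
    refine ⟨fun h' => hv (Or.inr ⟨x, hx, h'⟩), ?_⟩
    rintro rfl
    exact hv (Or.inl hx)
  have hwX : w ∉ X := fun h' => (hvX w h').1 hwv.symm
  obtain ⟨a, haX, haw⟩ : ∃ a ∈ X, G.Adj a w := hw.resolve_left hwX
  by_cases hd : ∀ u, (Nb G X u ∨ u = v) → Nb G (insert w {x ∈ X | G.Adj x w}) u
  · refine ⟨_, Or.inl ⟨⟨w, by simp⟩, ?_⟩, hd⟩
    intro x hx y hy hxy
    rcases hx with rfl | ⟨hx, hx'⟩ <;> rcases hy with rfl | ⟨hy, hy'⟩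
    · exact absurd rfl hxy
    · exact hy'.symm
    · exact hx'
    · exact h hx hy hxy
  push Not at hd
  have hU : ∀ u, (Nb G X u ∨ u = v) → ¬ Nb G (insert w {x ∈ X | G.Adj x w}) u →
      G.Adj u v ∧ ¬ G.Adj u w ∧ ¬ G.Adj u a := by
    intro u hu hnu
    have n1 : ¬ G.Adj w u := fun h' => hnu (Or.inr ⟨w, by simp, h'⟩)
    have n2 : ∀ y ∈ X, G.Adj y w → ¬ G.Adj y u := fun y hy hy' h' =>
      hnu (Or.inr ⟨y, by simp [hy, hy'], h'⟩)
    have huv : u ≠ v := by rintro rfl; exact n1 hwv.symm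
    refine ⟨?_, fun h' => n1 h'.symm, fun h' => n2 a haX haw h'.symm⟩
    rcases hu with (huX | ⟨x, hx, hxu⟩) | rfl
    · by_cases hua : u = a
      · subst hua
        exact absurd (Or.inl (by simp [haX, haw])) hnu
      · exact absurd (h haX huX (Ne.symm hua)) (n2 a haX haw)
    · have hxw : ¬ G.Adj x w := fun h' => n2 x hx h' hxu
      have hax : a ≠ x := by rintro rfl; exact hxw haw
      by_contra hc
      have := h haX hx hax
      have := n2 a haX haw
      have := hvX a haX
      have := hvX x hx
      have := p5_contra hfree v w a x u
      grind
    · exact absurd rfl huv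
  obtain ⟨u, hu, hnu⟩ := hd
  obtain ⟨u1, u2, u3⟩ := hU u hu hnu
  refine ⟨{a, w, v}, Or.inr ⟨a, w, v, ⟨haw, hwv.symm, (hvX a haX).1, (hvX a haX).2⟩, rfl⟩, ?_⟩
  intro p hp
  by_contra hcon
  have hpA : Nb G (insert w {x ∈ X | G.Adj x w}) p := by
    by_contra hc
    have := hU p hp hc
    simp only [nb3] at hcon
    grind
  simp only [nb3] at hcon
  have hpX : p ∉ X := by
    intro hpX
    have := h haX hpX
    grind
  obtain ⟨a2, ha2, ha2w, ha2p⟩ : ∃ a2 ∈ X, G.Adj a2 w ∧ G.Adj a2 p := by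
    rcases hpA with (rfl | ⟨h', -⟩) | ⟨y, (rfl | ⟨hy, hy'⟩), hyp⟩
    · simp at hcon
    · exact absurd h' hpX
    · exact absurd hyp (by tauto)
    · exact ⟨y, hy, hy', hyp⟩
  have ha2u : ¬ G.Adj a2 u := fun h' => hnu (Or.inr ⟨a2, by simp [ha2, ha2w], h'⟩)
  have := hvX a haX
  have := hvX a2 ha2
  have k1 := p5_contra hfree p a2 w v u
  have k2 := p5_contra hfree p u v w a
  grind

theorem step {V : Type*} {G : SimpleGraph V} (hfree : P5Free G) {X : Set V} {v w : V}
    (h : Good G X) (hv : ¬ Nb G X v) (hwv : G.Adj v w) (hw : Nb G X w) :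
    ∃ Y, Good G Y ∧ ∀ u, (Nb G X u ∨ u = v) → Nb G Y u := by
  rcases h with ⟨-, h⟩ | ⟨a, b, c, h, rfl⟩
  · exact stepClique hfree h hv hwv hw
  · exact stepP3 hfree h hv hwv hw

theorem bacso_tuza {V : Type*} [Fintype V] {G : SimpleGraph V} (hconn : G.Connected)
    (hfree : P5Free G) : ∃ X, Good G X ∧ ∀ v, Nb G X v := by
  obtain ⟨v0⟩ := hconn.nonempty
  obtain ⟨X, hX, hmax⟩ := Set.Finite.exists_maximalFor (fun X : Set V => {v | Nb G X v})
    {X | Good G X} (Set.toFinite _) ⟨{v0}, Or.inl ⟨by simp, by simp⟩⟩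
  refine ⟨X, hX, ?_⟩
  have hne : X.Nonempty := by
    rcases hX with ⟨h, -⟩ | ⟨a, b, c, -, rfl⟩
    · exact h
    · exact ⟨a, by simp⟩
  obtain ⟨x, hx⟩ := hne
  have hcl : ∀ w v, Nb G X w → G.Adj w v → Nb G X v := by
    intro w v hw hwv
    by_contra hv
    obtain ⟨Y, hY, hYs⟩ := step hfree hX hv hwv.symm hw
    have := hmax hY (fun u hu => hYs u (Or.inl hu))
    exact hv (this (hYs v (Or.inr rfl)))
  intro v
  obtain ⟨p⟩ := hconn.preconnected x v
  have : ∀ a b (p : G.Walk a b), Nb G X a → Nb G X b := by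
    intro a b p
    induction p with
    | nil => exact id
    | cons h _ ih => exact fun ha => ih (hcl _ _ ha h)
  exact this _ _ p (Or.inl hx)

theorem triple_of_adj {V : Type*} {G : SimpleGraph V} {a b c : V} (h1 : G.Adj a b)
    (h2 : G.Adj b c) (hac : a ≠ c) (hd : IsDominating G {a, b, c}) :
    (∃ a b c : V, G.Adj a b ∧ G.Adj a c ∧ G.Adj b c ∧
      IsDominating G {a, b, c}) ∨
    (∃ a b c : V, G.Adj a b ∧ G.Adj b c ∧ ¬ G.Adj a c ∧ a ≠ c ∧
      IsDominating G {a, b, c}) := by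
  by_cases h : G.Adj a c
  · exact Or.inl ⟨a, b, c, h1, h, h2, hd⟩
  · exact Or.inr ⟨a, b, c, h1, h2, h, hac, hd⟩

theorem dom_mono {V : Type*} {G : SimpleGraph V} {X Y : Set V} (h : X ⊆ Y)
    (hX : ∀ v, Nb G X v) : IsDominating G Y := by
  intro v
  rcases hX v with h' | ⟨u, hu, hu'⟩
  · exact Or.inl (h h')
  · exact Or.inr ⟨u, h hu, hu'⟩

/-- A vertex with two distinct incident `P`-edges has no non-`P` edge; a clique on
four vertices cannot meet a non-`P` edge. -/
theorem peds_black {V : Type*} {G : SimpleGraph V} {P : Set (Sym2 V)} (hP : IsPEDS G P)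
    {x y z u : V} (hy : s(x, y) ∈ P) (hz : s(x, z) ∈ P) (hyz : y ≠ z) (hu : G.Adj x u) :
    s(x, u) ∈ P := by
  by_contra h
  obtain ⟨e, -, he⟩ := hP.2 _ hu h
  have h1 := he s(x, y) ⟨hy, x, by simp, by simp⟩
  have h2 := he s(x, z) ⟨hz, x, by simp, by simp⟩
  have := h1.trans h2.symm
  simp at this
  grind

theorem peds_white {V : Type*} {G : SimpleGraph V} {P : Set (Sym2 V)} (hP : IsPEDS G P)
    {x y : V} (hxy : G.Adj x y) (h : s(x, y) ∉ P) :
    (∀ t, s(x, t) ∉ P) ∨ (∀ t, s(y, t) ∉ P) := by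
  by_contra hc
  push Not at hc
  obtain ⟨⟨t, ht⟩, ⟨r, hr⟩⟩ := hc
  obtain ⟨e, -, he⟩ := hP.2 _ hxy h
  have h1 := he s(x, t) ⟨ht, x, by simp, by simp⟩
  have h2 := he s(y, r) ⟨hr, y, by simp, by simp⟩
  have h3 := h1.trans h2.symm
  have := hxy.ne
  simp at h3
  grind

theorem peds_not_both {V : Type*} {G : SimpleGraph V} {P : Set (Sym2 V)} (hP : IsPEDS G P)
    {x y : V} (hxy : G.Adj x y) (hx : ∀ t, s(x, t) ∉ P) (hy : ∀ t, s(y, t) ∉ P) : False := by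
  obtain ⟨e, ⟨heP, v, hve, hv⟩, -⟩ := hP.2 _ hxy (hx y)
  obtain ⟨t, rfl⟩ := Sym2.mem_iff_exists.1 hve
  rcases Sym2.mem_iff.1 hv with rfl | rfl
  · exact hx _ heP
  · exact hy _ heP

theorem no_K4 {V : Type*} {G : SimpleGraph V} {P : Set (Sym2 V)} (hP : IsPEDS G P)
    {X : Set V} (hX : G.IsClique X) (hdom : ∀ v, Nb G X v) {a b c d : V}
    (ha : a ∈ X) (hb : b ∈ X) (hc : c ∈ X) (hd : d ∈ X) (hab : a ≠ b) (hac : a ≠ c)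
    (had : a ≠ d) (hbc : b ≠ c) (hbd : b ≠ d) (hcd : c ≠ d)
    {z : V} (hz : ∀ t, s(z, t) ∉ P) : False := by
  have h3 : ∀ x ∈ X, ∃ y1 ∈ X, ∃ y2 ∈ X, ∃ y3 ∈ X, x ≠ y1 ∧ x ≠ y2 ∧ x ≠ y3 ∧
      y1 ≠ y2 ∧ y1 ≠ y3 ∧ y2 ≠ y3 := by
    intro x hx
    by_cases h1 : x = a
    · exact ⟨b, hb, c, hc, d, hd, by grind⟩
    by_cases h2 : x = b
    · exact ⟨a, ha, c, hc, d, hd, by grind⟩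
    by_cases h3 : x = c
    · exact ⟨a, ha, b, hb, d, hd, by grind⟩
    · exact ⟨a, ha, b, hb, c, hc, by grind⟩
  have hw : ∀ x ∈ X, ¬ ∀ t, s(x, t) ∉ P := by
    intro x hx hxw
    obtain ⟨y1, m1, y2, m2, y3, m3, n1, n2, n3, n12, n13, n23⟩ := h3 x hx
    have nw : ∀ y ∈ X, x ≠ y → ¬ ∀ t, s(y, t) ∉ P := fun y hy hxy h =>
      peds_not_both hP (hX hx hy hxy) hxw h
    have e12 : s(y1, y2) ∈ P := by
      by_contra h
      rcases peds_white hP (hX m1 m2 n12) h with h | h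
      · exact nw _ m1 n1 h
      · exact nw _ m2 n2 h
    have e13 : s(y1, y3) ∈ P := by
      by_contra h
      rcases peds_white hP (hX m1 m3 n13) h with h | h
      · exact nw _ m1 n1 h
      · exact nw _ m3 n3 h
    have := peds_black hP e12 e13 n23 (hX m1 hx n1.symm)
    rw [Sym2.eq_swap] at this
    exact hxw _ this
  have he : ∀ x ∈ X, ∀ y ∈ X, x ≠ y → s(x, y) ∈ P := by
    intro x hx y hy hxy
    by_contra h
    rcases peds_white hP (hX hx hy hxy) h with h | h
    · exact hw _ hx h
    · exact hw _ hy h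
  rcases hdom z with h | ⟨x, hx, hxz⟩
  · exact hw z h hz
  · obtain ⟨y1, m1, y2, m2, y3, m3, n1, n2, n3, n12, n13, n23⟩ := h3 x hx
    have := peds_black hP (he x hx y1 m1 n1) (he x hx y2 m2 n2) n12 hxz
    rw [Sym2.eq_swap] at this
    exact hz _ this

/-- A connected `P₅`-free graph with a non-trivial perfect edge dominating set
has a dominating triangle or a dominating induced `P₃`. -/
theorem nontrivial_peds_dominating {V : Type*} [Fintype V] (G : SimpleGraph V)
    (hconn : G.Connected) (hfree : P5Free G) (P : Set (Sym2 V))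
    (hP : IsPEDS G P) (hne : P ≠ G.edgeSet) :
    (∃ a b c : V, G.Adj a b ∧ G.Adj a c ∧ G.Adj b c ∧
      IsDominating G {a, b, c}) ∨
    (∃ a b c : V, G.Adj a b ∧ G.Adj b c ∧ ¬ G.Adj a c ∧ a ≠ c ∧
      IsDominating G {a, b, c}) := by
  obtain ⟨f, hf, hfP⟩ : ∃ f ∈ G.edgeSet, f ∉ P := by
    by_contra h
    push Not at h
    exact hne (Set.Subset.antisymm hP.1 h)
  induction f with | _ y z => ?_
  have hyz : G.Adj y z := hf
  obtain ⟨w, hw⟩ : ∃ w, ∀ t, s(w, t) ∉ P := by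
    rcases peds_white hP hyz hfP with h | h
    · exact ⟨_, h⟩
    · exact ⟨_, h⟩
  obtain ⟨q, hqy, hqz⟩ : ∃ q, q ≠ y ∧ q ≠ z := by
    by_contra hc
    push Not at hc
    obtain ⟨e, ⟨heP, -⟩, -⟩ := hP.2 _ hf hfP
    induction e with | _ r t => ?_
    have hrt : G.Adj r t := hP.1 heP
    have := hrt.ne
    have hs : s(y, z) = s(r, t) := by
      have := hc r
      have := hc t
      simp
      grind
    exact hfP (hs ▸ heP)
  have hne' := hyz.ne
  obtain ⟨X, hX, hdom⟩ := bacso_tuza hconn hfree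
  rcases hX with ⟨⟨a, ha⟩, hX⟩ | ⟨a, b, c, ⟨h1, h2, h3, h4⟩, rfl⟩
  swap
  · exact Or.inr ⟨a, b, c, h1, h2, h3, h4, hdom⟩
  by_cases hb : ∃ b ∈ X, a ≠ b
  swap
  · push Not at hb
    have hadj : ∀ v, v ≠ a → G.Adj a v := by
      intro v hv
      rcases hdom v with h | ⟨u, hu, huv⟩
      · exact absurd (hb v h).symm hv
      · rw [hb u hu]; exact huv
    obtain ⟨s, t, hs, ht, hst⟩ : ∃ s t, s ≠ a ∧ t ≠ a ∧ s ≠ t := by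
      by_cases h1 : y = a
      · exact ⟨q, z, by grind⟩
      by_cases h2 : z = a
      · exact ⟨q, y, by grind⟩
      · exact ⟨y, z, h1, h2, hne'⟩
    refine triple_of_adj (hadj s hs).symm (hadj t ht) hst (dom_mono (X := X) ?_ hdom)
    intro x hx
    simp [(hb x hx).symm]
  obtain ⟨b, hb, hab⟩ := hb
  have hadj := hX ha hb hab
  by_cases hc : ∃ c ∈ X, a ≠ c ∧ b ≠ c
  swap
  · obtain ⟨t, hta, htb⟩ : ∃ t, t ≠ a ∧ t ≠ b := by
      by_cases h1 : y ≠ a ∧ y ≠ b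
      · exact ⟨y, h1⟩
      by_cases h2 : z ≠ a ∧ z ≠ b
      · exact ⟨z, h2⟩
      · exact ⟨q, by grind⟩
    have hsub : ∀ x ∈ X, x = a ∨ x = b := by grind
    have : G.Adj a t ∨ G.Adj b t := by
      rcases hdom t with h | ⟨u, hu, hut⟩
      · have := hsub t h
        grind
      · rcases hsub u hu with rfl | rfl
        · exact Or.inl hut
        · exact Or.inr hut
    rcases this with h | h
    · refine triple_of_adj hadj.symm h htb.symm (dom_mono (X := X) ?_ hdom)
      intro x hx
      have := hsub x hx
      simp
      tauto
    · refine triple_of_adj hadj h hta.symm (dom_mono (X := X) ?_ hdom)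
      intro x hx
      have := hsub x hx
      simp
      tauto
  obtain ⟨c, hc, hac, hbc⟩ := hc
  by_cases hd : ∃ d ∈ X, a ≠ d ∧ b ≠ d ∧ c ≠ d
  · obtain ⟨d, hd, had, hbd, hcd⟩ := hd
    exact (no_K4 hP hX hdom ha hb hc hd hab hac had hbc hbd hcd hw).elim
  · refine triple_of_adj hadj (hX hb hc hbc) hac (dom_mono (X := X) ?_ hdom)
    intro x hx
    simp
    grind
end
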